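/- Fix 0 < ρ < 1 and for each n let Σ = (1−ρ)I_n + ρ 11ᵀ be the n×n equicorrelation matrix, and let X, Y ~ N(0, Σ) be independent centered Gaussian vectors in R^n. Then: (i) √n · T_n converges in distribution to N(0, (1−ρ)²); and (ii) √n · ρ_n converges in distribution to N(0, 1). -/

import Mathlib

open MeasureTheory ProbabilityTheory Filter Topology Matrix

noncomputable section

/-- Sample mean `X̄ = (1/n) Σ_i X_i`. -/
def sampleMean {ι : Type*} [Fintype ι] (x : ι → ℝ) : ℝ := (∑ i, x i) / (Fintype.card ι : ℝ)

/-- Sample covariance `T_n = (1/n) Σ_i (X_i - X̄)(Y_i - Ȳ)`. -/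
def sampleCov {ι : Type*} [Fintype ι] (x y : ι → ℝ) : ℝ :=
  (∑ i, (x i - sampleMean x) * (y i - sampleMean y)) / (Fintype.card ι : ℝ)

/-- Sample correlation `ρₙ`. -/
def sampleCorr {ι : Type*} [Fintype ι] (x y : ι → ℝ) : ℝ :=
  (∑ i, (x i - sampleMean x) * (y i - sampleMean y)) /
    (Real.sqrt (∑ i, (x i - sampleMean x) ^ 2) * Real.sqrt (∑ i, (y i - sampleMean y) ^ 2))

/-- Convergence in distribution: weak convergence of the laws, tested against
bounded continuous functions. -/
def TendstoInDistribution (μ : ℕ → Measure ℝ) (ν : Measure ℝ) : Prop :=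
  ∀ f : BoundedContinuousFunction ℝ ℝ,
    Tendsto (fun n => ∫ x, f x ∂(μ n)) atTop (𝓝 (∫ x, f x ∂ν))

/-- Convergence in probability to a constant, for a sequence of laws on `ℝ`. -/
def TendstoInProbability (μ : ℕ → Measure ℝ) (c : ℝ) : Prop :=
  ∀ ε : ℝ, 0 < ε → Tendsto (fun n => μ n {x | ε ≤ |x - c|}) atTop (𝓝 0)

/-- `μ` is the centered multivariate Gaussian law `N(0, S)` on `ℝ^n`, characterized à la
Cramér–Wold: every linear functional `⟨a, ·⟩` has law `N(0, aᵀ S a)`. -/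
def IsCenteredGaussian {n : ℕ} (μ : Measure (Fin n → ℝ)) (S : Matrix (Fin n) (Fin n) ℝ) : Prop :=
  IsProbabilityMeasure μ ∧
    ∀ a : Fin n → ℝ,
      Measure.map (fun x => ∑ i, a i * x i) μ =
        gaussianReal 0 (Real.toNNReal (a ⬝ᵥ S.mulVec a))

/-- The equicorrelation matrix `Σ = (1-ρ)I + ρ 11ᵀ`. -/
def equicorr (n : ℕ) (ρ : ℝ) : Matrix (Fin n) (Fin n) ℝ :=
  Matrix.of fun i j => if i = j then 1 else ρ

/-!
`Tₙ` and `ρₙ` depend on `X` and `Y` only through their deviations from the sample mean. On contrasts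
`∑ cᵢ = 0` the quadratic form of the equicorrelation matrix is `(1 - ρ) ∑ cᵢ²`, so `X` and `Y` may
be replaced by independent i.i.d. samples from `N(0, 1 - ρ)`. For i.i.d. pairs with independent
coordinates of means `a`, `b`,
`√n Tₙ = √n · mean((Xᵢ - a)(Yᵢ - b)) - √n (X̄ - a) · (Ȳ - b)`,
where the central limit theorem applies to the first term and the second tends to zero in
probability. The statement for `ρₙ` follows by Slutsky's lemma, since the sample variances are
consistent.
-/

section Centering

variable {ι : Type*} [Fintype ι]

/-- The vector of deviations `xᵢ - x̄` of a sample from its mean. -/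
def centered (x : ι → ℝ) : ι → ℝ := fun i ↦ x i - sampleMean x

lemma sum_centered (x : ι → ℝ) : ∑ i, centered x i = 0 := by
  rcases isEmpty_or_nonempty ι with h | h
  · exact Finset.sum_of_isEmpty _
  · have hcard : (Fintype.card ι : ℝ) ≠ 0 := Nat.cast_ne_zero.2 Fintype.card_ne_zero
    simp [centered, sampleMean, mul_div_cancel₀ _ hcard]

lemma dotProduct_centered (c x : ι → ℝ) : c ⬝ᵥ centered x = centered c ⬝ᵥ x := by
  simp only [dotProduct, centered, sampleMean, mul_sub, sub_mul, Finset.sum_sub_distrib,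
    ← Finset.sum_mul, ← Finset.mul_sum]
  ring

lemma centered_centered (x : ι → ℝ) : centered (centered x) = centered x := by
  ext i
  rw [centered, sampleMean, sum_centered, zero_div, sub_zero]

lemma sampleCov_centered (x y : ι → ℝ) : sampleCov (centered x) (centered y) = sampleCov x y := by
  change centered (centered x) ⬝ᵥ centered (centered y) / _ = centered x ⬝ᵥ centered y / _
  rw [centered_centered, centered_centered]

lemma sampleCov_eq_sampleMean_mul_sub [Nonempty ι] (x y : ι → ℝ) (a b : ℝ) :
    sampleCov x y =
      sampleMean (fun i ↦ (x i - a) * (y i - b)) - (sampleMean x - a) * (sampleMean y - b) := by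
  have hcard : (Fintype.card ι : ℝ) ≠ 0 := Nat.cast_ne_zero.2 Fintype.card_ne_zero
  have hx : ∑ i, x i = Fintype.card ι * sampleMean x := (mul_div_cancel₀ _ hcard).symm
  have hy : ∑ i, y i = Fintype.card ι * sampleMean y := (mul_div_cancel₀ _ hcard).symm
  have hxy : ∑ i, (x i - a) * (y i - b) =
      Fintype.card ι * sampleMean fun i ↦ (x i - a) * (y i - b) := (mul_div_cancel₀ _ hcard).symm
  rw [sampleCov, div_eq_iff hcard, sub_mul, mul_comm (sampleMean _), ← hxy]
  simp only [sub_mul, mul_sub, Finset.sum_sub_distrib, ← Finset.sum_mul, ← Finset.mul_sum, hx, hy,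
    Finset.sum_const, Finset.card_univ, nsmul_eq_mul]
  ring

lemma sampleCorr_eq_sampleCov_div (x y : ι → ℝ) :
    sampleCorr x y = sampleCov x y / (√(sampleCov x x) * √(sampleCov y y)) := by
  have hcard : (0 : ℝ) ≤ Fintype.card ι := Nat.cast_nonneg _
  simp_rw [sampleCorr, sampleCov, ← pow_two, Real.sqrt_div' _ hcard, div_mul_div_comm,
    Real.mul_self_sqrt hcard]
  rcases isEmpty_or_nonempty ι with h | h
  · simp
  · exact (div_div_div_cancel_right₀ (Nat.cast_ne_zero.2 Fintype.card_ne_zero) _ _).symm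

lemma sampleCorr_centered (x y : ι → ℝ) :
    sampleCorr (centered x) (centered y) = sampleCorr x y := by
  simp only [sampleCorr_eq_sampleCov_div, sampleCov_centered]

@[fun_prop]
lemma measurable_sampleMean : Measurable (sampleMean : (ι → ℝ) → ℝ) := by
  unfold sampleMean
  fun_prop

@[fun_prop]
lemma measurable_centered : Measurable (centered : (ι → ℝ) → ι → ℝ) := by
  unfold centered
  fun_prop

@[fun_prop]
lemma measurable_sampleCov :
    Measurable fun p : (ι → ℝ) × (ι → ℝ) ↦ sampleCov p.1 p.2 := by
  unfold sampleCov
  fun_prop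

@[fun_prop]
lemma measurable_sampleCorr :
    Measurable fun p : (ι → ℝ) × (ι → ℝ) ↦ sampleCorr p.1 p.2 := by
  unfold sampleCorr
  fun_prop

end Centering

section LimitTheorems

variable {Ω Ω' : Type*} {mΩ : MeasurableSpace Ω} {mΩ' : MeasurableSpace Ω'} {P : Measure Ω}
  {P' : Measure Ω'} [IsProbabilityMeasure P] [IsProbabilityMeasure P']

lemma tendstoInMeasure_of_tendstoInDistribution_const {ι E : Type*} {l : Filter ι}
    [PseudoEMetricSpace E] [MeasurableSpace E] [OpensMeasurableSpace E] {U : ι → Ω → E} {c : E}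
    (hU : MeasureTheory.TendstoInDistribution U l (fun _ : Ω' ↦ c) (fun _ ↦ P) P') :
    TendstoInMeasure P U l (fun _ ↦ c) := by
  intro ε hε
  have hclosed : IsClosed {x : E | ε ≤ edist x c} :=
    isClosed_le continuous_const (continuous_id.edist continuous_const)
  have hnull : P'.map (fun _ ↦ c) {x : E | ε ≤ edist x c} = 0 := by
    rw [Measure.map_apply measurable_const hclosed.measurableSet]
    simp [hε.not_ge]
  have hlimsup := ProbabilityMeasure.limsup_measure_closed_le_of_tendsto hU.tendsto hclosed
  simp only [ProbabilityMeasure.coe_mk, hnull,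
    Measure.map_apply_of_aemeasurable (hU.forall_aemeasurable _) hclosed.measurableSet] at hlimsup
  exact tendsto_of_le_liminf_of_limsup_le zero_le hlimsup

lemma tendstoInMeasure_mul_of_tendstoInDistribution {ι : Type*} {l : Filter ι}
    [l.IsCountablyGenerated] {U V : ι → Ω → ℝ} {Z : Ω' → ℝ}
    (hU : MeasureTheory.TendstoInDistribution U l Z (fun _ ↦ P) P')
    (hV : TendstoInMeasure P V l (fun _ ↦ 0)) (hV_meas : ∀ n, AEMeasurable (V n) P) :
    TendstoInMeasure P (fun n ω ↦ U n ω * V n ω) l (fun _ ↦ 0) := by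
  refine tendstoInMeasure_of_tendstoInDistribution_const (P' := P') ?_
  simpa only [mul_zero] using hU.continuous_comp_prodMk_of_tendstoInMeasure_const
    (g := fun p : ℝ × ℝ ↦ p.1 * p.2) continuous_mul hV hV_meas

lemma tendstoInDistribution_map {Ω : ℕ → Type*} {_ : ∀ n, MeasurableSpace (Ω n)}
    {P : (n : ℕ) → Measure (Ω n)} [∀ n, IsProbabilityMeasure (P n)] {U : (n : ℕ) → Ω n → ℝ}
    {Z : Ω' → ℝ} (hU : MeasureTheory.TendstoInDistribution U atTop Z P P') :
    _root_.TendstoInDistribution (fun n ↦ (P n).map (U n)) (P'.map Z) :=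
  ProbabilityMeasure.tendsto_iff_forall_integral_tendsto.1 hU.tendsto

end LimitTheorems

section Independence

variable {Ω : Type*} {mΩ : MeasurableSpace Ω} {P : Measure Ω} {X Y : Ω → ℝ}

lemma memLp_two_mul_of_indepFun (hX : MemLp X 2 P) (hY : MemLp Y 2 P) (h : X ⟂ᵢ[P] Y) :
    MemLp (fun ω ↦ X ω * Y ω) 2 P := by
  rw [memLp_two_iff_integrable_sq (hX.1.fun_mul hY.1)]
  simp_rw [mul_pow]
  exact (h.comp (measurable_id.pow_const 2) (measurable_id.pow_const 2)).integrable_mul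
    hX.integrable_sq hY.integrable_sq

lemma variance_sub_mul_sub_of_indepFun [IsProbabilityMeasure P] (hX : MemLp X 2 P)
    (hY : MemLp Y 2 P) (h : X ⟂ᵢ[P] Y) :
    Var[fun ω ↦ (X ω - P[X]) * (Y ω - P[Y]); P] = Var[X; P] * Var[Y; P] := by
  have hX' : MemLp (fun ω ↦ X ω - P[X]) 2 P := hX.sub (memLp_const _)
  have hY' : MemLp (fun ω ↦ Y ω - P[Y]) 2 P := hY.sub (memLp_const _)
  have h' : (fun ω ↦ X ω - P[X]) ⟂ᵢ[P] (fun ω ↦ Y ω - P[Y]) :=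
    h.comp (measurable_id.sub_const _) (measurable_id.sub_const _)
  have hmean : P[fun ω ↦ (X ω - P[X]) * (Y ω - P[Y])] = 0 :=
    h.covariance_eq_zero hX hY
  rw [variance_eq_integral hX.1.aemeasurable, variance_eq_integral hY.1.aemeasurable,
    variance_of_integral_eq_zero (memLp_two_mul_of_indepFun hX' hY' h').1.aemeasurable hmean]
  simp_rw [mul_pow]
  exact IndepFun.integral_fun_mul_eq_mul_integral
    (h'.comp (measurable_id.pow_const 2) (measurable_id.pow_const 2)) (hX'.1.pow 2) (hY'.1.pow 2)

end Independence

section IID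

lemma sampleMean_fin (n : ℕ) (f : ℕ → ℝ) :
    sampleMean (fun i : Fin n ↦ f i) = (∑ i ∈ Finset.range n, f i) / n := by
  rw [sampleMean, Fin.sum_univ_eq_sum_range, Fintype.card_fin]

variable {Ω Ω' : Type*} {mΩ : MeasurableSpace Ω} {mΩ' : MeasurableSpace Ω'} {P : Measure Ω}
  {P' : Measure Ω'}

lemma tendsto_sampleMean_ae {X : ℕ → Ω → ℝ} (hX : Integrable (X 0) P) (hindep : iIndepFun X P)
    (hident : ∀ i, IdentDistrib (X i) (X 0) P P) :
    ∀ᵐ ω ∂P, Tendsto (fun n : ℕ ↦ sampleMean fun i : Fin n ↦ X i ω) atTop (𝓝 P[X 0]) := by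
  filter_upwards [strong_law_ae_real X hX (fun _ _ hij ↦ hindep.indepFun hij) hident] with ω hω
  simpa only [sampleMean_fin _ fun i ↦ X i ω] using hω

variable [IsProbabilityMeasure P] [IsProbabilityMeasure P']

lemma tendstoInDistribution_sqrt_mul_sampleMean_sub {X : ℕ → Ω → ℝ} {G : Ω' → ℝ}
    (hX : MemLp (X 0) 2 P) (hindep : iIndepFun X P) (hident : ∀ i, IdentDistrib (X i) (X 0) P P)
    (hG : HasLaw G (gaussianReal 0 Var[X 0; P].toNNReal) P') :
    MeasureTheory.TendstoInDistribution
      (fun (n : ℕ) ω ↦ √n * (sampleMean (fun i : Fin n ↦ X i ω) - P[X 0])) atTop G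
      (fun _ ↦ P) P' := by
  refine (tendstoInDistribution_inv_sqrt_mul_sum_sub hG hX hindep hident).congr
    (fun n ↦ .of_forall fun ω ↦ ?_) .rfl
  beta_reduce
  rw [sampleMean_fin n fun i ↦ X i ω]
  rcases n.eq_zero_or_pos with rfl | hn
  · simp
  · have hn' : (0 : ℝ) < n := Nat.cast_pos.2 hn
    rw [div_sub' hn'.ne', mul_div_left_comm, Real.sqrt_div_self, mul_comm]

variable {Z : ℕ → Ω → ℝ × ℝ}

lemma tendsto_sampleCov_ae (hX : MemLp (fun ω ↦ (Z 0 ω).1) 2 P)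
    (hY : MemLp (fun ω ↦ (Z 0 ω).2) 2 P) (hindep : iIndepFun Z P)
    (hident : ∀ i, IdentDistrib (Z i) (Z 0) P P) :
    ∀ᵐ ω ∂P, Tendsto
      (fun n : ℕ ↦ sampleCov (fun i : Fin n ↦ (Z i ω).1) (fun i : Fin n ↦ (Z i ω).2)) atTop
      (𝓝 cov[fun ω ↦ (Z 0 ω).1, fun ω ↦ (Z 0 ω).2; P]) := by
  have hmean {g : ℝ × ℝ → ℝ} (hg : Measurable g) (hint : Integrable (fun ω ↦ g (Z 0 ω)) P) :
      ∀ᵐ ω ∂P, Tendsto (fun n : ℕ ↦ sampleMean fun i : Fin n ↦ g (Z i ω)) atTop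
        (𝓝 (∫ ω, g (Z 0 ω) ∂P)) :=
    tendsto_sampleMean_ae (X := fun i ω ↦ g (Z i ω)) hint (hindep.comp (fun _ ↦ g) fun _ ↦ hg)
      fun i ↦ (hident i).comp hg
  filter_upwards [hmean measurable_fst (hX.integrable one_le_two),
    hmean measurable_snd (hY.integrable one_le_two),
    hmean (measurable_fst.mul measurable_snd) (hX.integrable_mul hY)] with ω hx hy hxy
  rw [covariance_eq_sub hX hY]
  refine (hxy.sub (hx.mul hy)).congr' ?_
  filter_upwards [eventually_ne_atTop 0] with n hn
  have : NeZero n := ⟨hn⟩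
  simp [sampleCov_eq_sampleMean_mul_sub _ _ 0 0]

lemma tendsto_sampleCov_self_ae {X : ℕ → Ω → ℝ} (hX : MemLp (X 0) 2 P) (hindep : iIndepFun X P)
    (hident : ∀ i, IdentDistrib (X i) (X 0) P P) :
    ∀ᵐ ω ∂P, Tendsto (fun n : ℕ ↦ sampleCov (fun i : Fin n ↦ X i ω) fun i : Fin n ↦ X i ω) atTop
      (𝓝 Var[X 0; P]) := by
  have hdiag : Measurable fun x : ℝ ↦ (x, x) := by fun_prop
  rw [← covariance_self hX.1.aemeasurable]
  exact tendsto_sampleCov_ae (Z := fun i ω ↦ (X i ω, X i ω)) hX hX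
    (hindep.comp (fun _ x ↦ (x, x)) fun _ ↦ hdiag) fun i ↦ (hident i).comp hdiag

lemma tendstoInMeasure_sqrt_mul_sampleMean_sub_mul (hX : MemLp (fun ω ↦ (Z 0 ω).1) 2 P)
    (hY : Integrable (fun ω ↦ (Z 0 ω).2) P) (hindep : iIndepFun Z P)
    (hident : ∀ i, IdentDistrib (Z i) (Z 0) P P) :
    TendstoInMeasure P
      (fun (n : ℕ) ω ↦ √n * (sampleMean (fun i : Fin n ↦ (Z i ω).1) - ∫ ω, (Z 0 ω).1 ∂P) *
        -(sampleMean (fun i : Fin n ↦ (Z i ω).2) - ∫ ω, (Z 0 ω).2 ∂P)) atTop (fun _ ↦ 0) := by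
  have hZ (i : ℕ) : AEMeasurable (Z i) P := (hident i).aemeasurable_fst
  have hmean_meas (n : ℕ) : AEMeasurable
      (fun ω ↦ -(sampleMean (fun i : Fin n ↦ (Z i ω).2) - ∫ ω, (Z 0 ω).2 ∂P)) P := by fun_prop
  have hmean : TendstoInMeasure P
      (fun (n : ℕ) ω ↦ -(sampleMean (fun i : Fin n ↦ (Z i ω).2) - ∫ ω, (Z 0 ω).2 ∂P)) atTop
      (fun _ ↦ 0) := by
    refine tendstoInMeasure_of_tendsto_ae (fun n ↦ (hmean_meas n).aestronglyMeasurable) ?_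
    filter_upwards [tendsto_sampleMean_ae hY (hindep.comp (fun _ ↦ Prod.snd) fun _ ↦ measurable_snd)
      fun i ↦ (hident i).comp measurable_snd] with ω hω
    simpa using (hω.sub_const (∫ ω, (Z 0 ω).2 ∂P)).neg
  exact tendstoInMeasure_mul_of_tendstoInDistribution
    (tendstoInDistribution_sqrt_mul_sampleMean_sub hX
      (hindep.comp (fun _ ↦ Prod.fst) fun _ ↦ measurable_fst)
      (fun i ↦ (hident i).comp measurable_fst) .id) hmean hmean_meas

lemma tendstoInDistribution_sqrt_mul_sampleCov_sub {G : Ω' → ℝ}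
    (hX : MemLp (fun ω ↦ (Z 0 ω).1) 2 P) (hY : Integrable (fun ω ↦ (Z 0 ω).2) P)
    (hXY : MemLp (fun ω ↦ ((Z 0 ω).1 - ∫ ω, (Z 0 ω).1 ∂P) * ((Z 0 ω).2 - ∫ ω, (Z 0 ω).2 ∂P)) 2 P)
    (hindep : iIndepFun Z P) (hident : ∀ i, IdentDistrib (Z i) (Z 0) P P)
    (hG : HasLaw G (gaussianReal 0 Var[fun ω ↦ ((Z 0 ω).1 - ∫ ω, (Z 0 ω).1 ∂P) *
      ((Z 0 ω).2 - ∫ ω, (Z 0 ω).2 ∂P); P].toNNReal) P') :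
    MeasureTheory.TendstoInDistribution
      (fun (n : ℕ) ω ↦ √n * (sampleCov (fun i : Fin n ↦ (Z i ω).1) (fun i : Fin n ↦ (Z i ω).2) -
        cov[fun ω ↦ (Z 0 ω).1, fun ω ↦ (Z 0 ω).2; P])) atTop G (fun _ ↦ P) P' := by
  set a := ∫ ω, (Z 0 ω).1 ∂P with ha
  set b := ∫ ω, (Z 0 ω).2 ∂P with hb
  have hZ (i : ℕ) : AEMeasurable (Z i) P := (hident i).aemeasurable_fst
  have hprod : Measurable fun p : ℝ × ℝ ↦ (p.1 - a) * (p.2 - b) := by fun_prop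
  have hclt := tendstoInDistribution_sqrt_mul_sampleMean_sub hXY
    (X := fun i ω ↦ ((Z i ω).1 - a) * ((Z i ω).2 - b)) (hindep.comp (fun _ ↦ _) fun _ ↦ hprod)
    (fun i ↦ (hident i).comp hprod) hG
  have hremainder := tendstoInMeasure_sqrt_mul_sampleMean_sub_mul hX hY hindep hident
  refine (hclt.add_of_tendstoInMeasure_const hremainder fun n ↦ by fun_prop).congr
    (fun n ↦ .of_forall fun ω ↦ ?_) (.of_forall fun ω ↦ add_zero _)
  rcases n.eq_zero_or_pos with rfl | hn
  · simp
  · have : Nonempty (Fin n) := Fin.pos_iff_nonempty.1 hn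
    simp only [Pi.add_apply, sampleCov_eq_sampleMean_mul_sub _ _ a b, covariance, ha, hb]
    ring

lemma tendstoInDistribution_sqrt_mul_sampleCov_of_indepFun {G : Ω' → ℝ}
    (hX : MemLp (fun ω ↦ (Z 0 ω).1) 2 P) (hY : MemLp (fun ω ↦ (Z 0 ω).2) 2 P)
    (hXY : (fun ω ↦ (Z 0 ω).1) ⟂ᵢ[P] fun ω ↦ (Z 0 ω).2) (hindep : iIndepFun Z P)
    (hident : ∀ i, IdentDistrib (Z i) (Z 0) P P)
    (hG : HasLaw G (gaussianReal 0
      (Var[fun ω ↦ (Z 0 ω).1; P] * Var[fun ω ↦ (Z 0 ω).2; P]).toNNReal) P') :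
    MeasureTheory.TendstoInDistribution
      (fun (n : ℕ) ω ↦ √n * sampleCov (fun i : Fin n ↦ (Z i ω).1) (fun i : Fin n ↦ (Z i ω).2))
      atTop G (fun _ ↦ P) P' := by
  have hprod := memLp_two_mul_of_indepFun (hX.sub (memLp_const (∫ ω, (Z 0 ω).1 ∂P)))
    (hY.sub (memLp_const (∫ ω, (Z 0 ω).2 ∂P)))
    (hXY.comp (measurable_id.sub_const _) (measurable_id.sub_const _))
  rw [← variance_sub_mul_sub_of_indepFun hX hY hXY] at hG
  simpa only [hXY.covariance_eq_zero hX hY, sub_zero] using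
    tendstoInDistribution_sqrt_mul_sampleCov_sub hX (hY.integrable one_le_two) hprod hindep hident
      hG

lemma tendstoInDistribution_sqrt_mul_sampleCorr_of_indepFun {G : Ω' → ℝ}
    (hX : MemLp (fun ω ↦ (Z 0 ω).1) 2 P) (hY : MemLp (fun ω ↦ (Z 0 ω).2) 2 P)
    (hVarX : Var[fun ω ↦ (Z 0 ω).1; P] ≠ 0) (hVarY : Var[fun ω ↦ (Z 0 ω).2; P] ≠ 0)
    (hXY : (fun ω ↦ (Z 0 ω).1) ⟂ᵢ[P] fun ω ↦ (Z 0 ω).2) (hindep : iIndepFun Z P)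
    (hident : ∀ i, IdentDistrib (Z i) (Z 0) P P) (hG : HasLaw G (gaussianReal 0 1) P') :
    MeasureTheory.TendstoInDistribution
      (fun (n : ℕ) ω ↦ √n * sampleCorr (fun i : Fin n ↦ (Z i ω).1) (fun i : Fin n ↦ (Z i ω).2))
      atTop G (fun _ ↦ P) P' := by
  set s := √Var[fun ω ↦ (Z 0 ω).1; P] * √Var[fun ω ↦ (Z 0 ω).2; P] with hs
  have hZ (i : ℕ) : AEMeasurable (Z i) P := (hident i).aemeasurable_fst
  have hs_ne : s ≠ 0 := mul_ne_zero ((Real.sqrt_ne_zero (variance_nonneg _ _)).2 hVarX)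
    ((Real.sqrt_ne_zero (variance_nonneg _ _)).2 hVarY)
  have hdenom_meas (n : ℕ) : AEMeasurable (fun ω ↦
      (√(sampleCov (fun i : Fin n ↦ (Z i ω).1) fun i ↦ (Z i ω).1) *
        √(sampleCov (fun i : Fin n ↦ (Z i ω).2) fun i ↦ (Z i ω).2))⁻¹) P := by
    fun_prop
  have hdenom : TendstoInMeasure P (fun (n : ℕ) ω ↦
      (√(sampleCov (fun i : Fin n ↦ (Z i ω).1) fun i ↦ (Z i ω).1) *
        √(sampleCov (fun i : Fin n ↦ (Z i ω).2) fun i ↦ (Z i ω).2))⁻¹) atTop (fun _ ↦ s⁻¹) := by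
    refine tendstoInMeasure_of_tendsto_ae (fun n ↦ (hdenom_meas n).aestronglyMeasurable) ?_
    filter_upwards [
      tendsto_sampleCov_self_ae hX (hindep.comp (fun _ ↦ Prod.fst) fun _ ↦ measurable_fst)
        fun i ↦ (hident i).comp measurable_fst,
      tendsto_sampleCov_self_ae hY (hindep.comp (fun _ ↦ Prod.snd) fun _ ↦ measurable_snd)
        fun i ↦ (hident i).comp measurable_snd] with ω hx hy
    exact (hx.sqrt.mul hy.sqrt).inv₀ hs_ne
  have hs_sq : s ^ 2 = Var[fun ω ↦ (Z 0 ω).1; P] * Var[fun ω ↦ (Z 0 ω).2; P] := by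
    rw [hs, mul_pow, Real.sq_sqrt (variance_nonneg _ _), Real.sq_sqrt (variance_nonneg _ _)]
  have hsG : HasLaw (fun ω ↦ G ω * s) (gaussianReal 0
      (Var[fun ω ↦ (Z 0 ω).1; P] * Var[fun ω ↦ (Z 0 ω).2; P]).toNNReal) P' := by
    convert gaussianReal_mul_const hG s using 2
    · rw [mul_zero]
    · rw [← hs_sq, Real.toNNReal_of_nonneg (sq_nonneg s), mul_one]
  refine ((tendstoInDistribution_sqrt_mul_sampleCov_of_indepFun hX hY hXY hindep hident
    hsG).continuous_comp_prodMk_of_tendstoInMeasure_const (g := fun p : ℝ × ℝ ↦ p.1 * p.2)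
    continuous_mul hdenom hdenom_meas).congr (fun n ↦ .of_forall fun ω ↦ ?_)
    (.of_forall fun ω ↦ mul_inv_cancel_right₀ hs_ne _)
  beta_reduce
  rw [sampleCorr_eq_sampleCov_div, mul_assoc, div_eq_mul_inv]

end IID

section CenteredLaw

variable {n : ℕ} {μ ν : Measure (Fin n → ℝ)} {S T : Matrix (Fin n) (Fin n) ℝ}

-- A functional of `centered x` is a contrast `∑ cᵢ xᵢ` with `∑ cᵢ = 0`, so by Cramér–Wold only the
-- values of the two covariances on contrasts matter.
lemma IsCenteredGaussian.map_centered_eq (hμ : IsCenteredGaussian μ S)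
    (hν : IsCenteredGaussian ν T)
    (hST : ∀ c : Fin n → ℝ, ∑ i, c i = 0 → c ⬝ᵥ S *ᵥ c = c ⬝ᵥ T *ᵥ c) :
    μ.map centered = ν.map centered := by
  obtain ⟨hμ_prob, hμ⟩ := hμ
  obtain ⟨hν_prob, hν⟩ := hν
  refine Measure.ext_of_charFunDual (funext fun L ↦ ?_)
  set c : Fin n → ℝ := centered fun i ↦ L (Pi.single i 1)
  have hL : L ∘ centered = fun x ↦ ∑ i, c i * x i := by
    ext x
    calc L (centered x) = (fun i ↦ L (Pi.single i 1)) ⬝ᵥ centered x := by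
          conv_lhs => rw [pi_eq_sum_univ' (centered x), map_sum]
          simp only [map_smul, smul_eq_mul, dotProduct, mul_comm]
      _ = ∑ i, c i * x i := dotProduct_centered _ _
  simp_rw [charFunDual_eq_charFun_map_one, Measure.map_map L.measurable measurable_centered, hL, hμ,
    hν, hST c (sum_centered _)]

lemma isCenteredGaussian_pi_gaussianReal (n : ℕ) (v : NNReal) :
    IsCenteredGaussian (Measure.pi fun _ : Fin n ↦ gaussianReal 0 v)
      ((v : ℝ) • (1 : Matrix (Fin n) (Fin n) ℝ)) := by
  refine ⟨inferInstance, fun a ↦ ?_⟩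
  have hmap : (Measure.pi fun _ : Fin n ↦ gaussianReal 0 v).map (fun x ↦ ∑ i, a i * x i) =
      (Measure.pi fun i ↦ (gaussianReal 0 v).map (a i * ·)).map (fun x ↦ ∑ i, x i) := by
    rw [← Measure.pi_map_pi (fun i ↦ by fun_prop), Measure.map_map (by fun_prop) (by fun_prop)]
    rfl
  have hvar : a ⬝ᵥ ((v : ℝ) • (1 : Matrix (Fin n) (Fin n) ℝ)) *ᵥ a = v * ∑ i, a i ^ 2 := by
    rw [smul_mulVec, one_mulVec, dotProduct_smul, smul_eq_mul]
    simp only [dotProduct, pow_two]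
  have hvar_nonneg : 0 ≤ v * ∑ i, a i ^ 2 := by positivity
  refine Measure.ext_of_charFun (funext fun t ↦ ?_)
  simp_rw [hmap, gaussianReal_map_const_mul, charFun_map_sum_pi_eq_prod, Finset.prod_apply,
    charFun_gaussianReal, ← Complex.exp_sum, hvar, Real.coe_toNNReal _ hvar_nonneg, mul_zero]
  congr 1
  push_cast
  simp only [mul_zero, zero_mul, zero_sub, Finset.sum_mul, Finset.sum_div, Finset.sum_neg_distrib,
    mul_comm (v : ℂ)]

lemma dotProduct_equicorr_mulVec (ρ : ℝ) (c : Fin n → ℝ) :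
    c ⬝ᵥ equicorr n ρ *ᵥ c = (1 - ρ) * (c ⬝ᵥ c) + ρ * (∑ i, c i) ^ 2 := by
  have h : equicorr n ρ = (1 - ρ) • (1 : Matrix (Fin n) (Fin n) ℝ) + ρ • vecMulVec 1 1 := by
    ext i j
    by_cases hij : i = j <;> simp [equicorr, hij]
  simp only [h, add_mulVec, smul_mulVec, one_mulVec, vecMulVec_mulVec, dotProduct_add,
    dotProduct_smul, op_smul_eq_smul, dotProduct_one, one_dotProduct, smul_eq_mul, pow_two]

lemma IsCenteredGaussian.map_centered_equicorr {ρ : ℝ} (hρ : ρ ≤ 1)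
    (hμ : IsCenteredGaussian μ (equicorr n ρ)) :
    μ.map centered = (Measure.pi fun _ ↦ gaussianReal 0 (1 - ρ).toNNReal).map centered := by
  refine hμ.map_centered_eq (isCenteredGaussian_pi_gaussianReal n _) fun c hc ↦ ?_
  rw [dotProduct_equicorr_mulVec, hc, Real.coe_toNNReal _ (sub_nonneg.2 hρ), smul_mulVec,
    one_mulVec, dotProduct_smul, smul_eq_mul]
  ring

end CenteredLaw

section Transfer

lemma map_prod_eq_of_map_centered_eq {ι E : Type*} [Fintype ι] [MeasurableSpace E]
    {μ ν μ' ν' : Measure (ι → ℝ)} [SFinite μ] [SFinite ν] [SFinite μ'] [SFinite ν']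
    {F : (ι → ℝ) × (ι → ℝ) → E} (hF : Measurable F)
    (hF_centered : ∀ x y, F (centered x, centered y) = F (x, y))
    (hμ : μ.map centered = μ'.map centered) (hν : ν.map centered = ν'.map centered) :
    (μ.prod ν).map F = (μ'.prod ν').map F := by
  have hF_comp : F ∘ Prod.map centered centered = F := funext fun p ↦ hF_centered p.1 p.2
  have hcentered : Measurable (Prod.map centered centered : (ι → ℝ) × (ι → ℝ) → _) := by fun_prop
  rw [← hF_comp, ← Measure.map_map hF hcentered, ← Measure.map_map hF hcentered,
    ← Measure.map_prod_map _ _ measurable_centered measurable_centered,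
    ← Measure.map_prod_map _ _ measurable_centered measurable_centered, hμ, hν]

lemma hasLaw_pi_prod_pi {ι κ Ω α β : Type*} [Fintype κ] {_ : MeasurableSpace Ω}
    {_ : MeasurableSpace α} {_ : MeasurableSpace β} {P : Measure Ω} {γ : Measure α}
    {δ : Measure β} [SigmaFinite γ] [SigmaFinite δ] {Z : ι → Ω → α × β} (e : κ ↪ ι)
    (hZ : ∀ i, HasLaw (Z i) (γ.prod δ) P) (hindep : iIndepFun Z P) :
    HasLaw (fun ω ↦ (fun k ↦ (Z (e k) ω).1, fun k ↦ (Z (e k) ω).2))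
      ((Measure.pi fun _ : κ ↦ γ).prod (Measure.pi fun _ ↦ δ)) P :=
  (measurePreserving_arrowProdEquivProdArrow α β κ (fun _ ↦ γ) fun _ ↦ δ).comp_hasLaw
    ((hindep.precomp e.injective).hasLaw_pi fun k ↦ hZ (e k))

lemma isProbabilityMeasure_of_map_eq {α β : Type*} [MeasurableSpace α] [MeasurableSpace β]
    {μ ν : Measure α} [IsProbabilityMeasure ν] {f : α → β} (hf : AEMeasurable f ν)
    (h : μ.map f = ν.map f) : IsProbabilityMeasure μ :=
  have : IsProbabilityMeasure (μ.map f) := h ▸ Measure.isProbabilityMeasure_map hf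
  Measure.isProbabilityMeasure_of_map f

lemma tendstoInDistribution_prod_of_map_centered_eq {Ω : Type*} {mΩ : MeasurableSpace Ω}
    {P : Measure Ω} [IsProbabilityMeasure P] {Z : ℕ → Ω → ℝ × ℝ} {γ δ κ : Measure ℝ}
    [IsProbabilityMeasure γ] [IsProbabilityMeasure δ] [IsProbabilityMeasure κ]
    {μ ν : (n : ℕ) → Measure (Fin n → ℝ)} {F : (n : ℕ) → (Fin n → ℝ) × (Fin n → ℝ) → ℝ}
    (hZ : ∀ i, HasLaw (Z i) (γ.prod δ) P) (hindep : iIndepFun Z P)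
    (hμ : ∀ n, (μ n).map centered = (Measure.pi fun _ ↦ γ).map centered)
    (hν : ∀ n, (ν n).map centered = (Measure.pi fun _ ↦ δ).map centered)
    (hF : ∀ n, Measurable (F n))
    (hF_centered : ∀ n x y, F n (centered x, centered y) = F n (x, y))
    (hlim : MeasureTheory.TendstoInDistribution
      (fun (n : ℕ) ω ↦ F n (fun i ↦ (Z i ω).1, fun i ↦ (Z i ω).2)) atTop id (fun _ ↦ P) κ) :
    _root_.TendstoInDistribution (fun n ↦ ((μ n).prod (ν n)).map (F n)) κ := by
  have hlaw (n : ℕ) : ((μ n).prod (ν n)).map (F n) =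
      P.map fun ω ↦ F n (fun i ↦ (Z i ω).1, fun i ↦ (Z i ω).2) := by
    have := isProbabilityMeasure_of_map_eq measurable_centered.aemeasurable (hμ n)
    have := isProbabilityMeasure_of_map_eq measurable_centered.aemeasurable (hν n)
    have hsample := hasLaw_pi_prod_pi (Fin.valEmbedding (n := n)) hZ hindep
    rw [map_prod_eq_of_map_centered_eq (hF n) (hF_centered n) (hμ n) (hν n), ← hsample.map_eq,
      AEMeasurable.map_map_of_aemeasurable (hF n).aemeasurable hsample.aemeasurable]
    rfl
  simpa only [hlaw, Measure.map_id] using tendstoInDistribution_map hlim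

end Transfer

theorem equicorrelation_gaussian_general (γ δ : Measure ℝ) [IsProbabilityMeasure γ]
    [IsProbabilityMeasure δ] (hγ : MemLp id 2 γ) (hδ : MemLp id 2 δ) (hγ_var : Var[id; γ] ≠ 0)
    (hδ_var : Var[id; δ] ≠ 0) (μ ν : (n : ℕ) → Measure (Fin n → ℝ))
    (hμ : ∀ n, (μ n).map centered = (Measure.pi fun _ ↦ γ).map centered)
    (hν : ∀ n, (ν n).map centered = (Measure.pi fun _ ↦ δ).map centered) :
    TendstoInDistribution
      (fun n ↦ ((μ n).prod (ν n)).map fun p : (Fin n → ℝ) × (Fin n → ℝ) ↦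
        √n * sampleCov p.1 p.2)
      (gaussianReal 0 (Var[id; γ] * Var[id; δ]).toNNReal) ∧
    TendstoInDistribution
      (fun n ↦ ((μ n).prod (ν n)).map fun p : (Fin n → ℝ) × (Fin n → ℝ) ↦
        √n * sampleCorr p.1 p.2)
      (gaussianReal 0 1) := by
  obtain ⟨Ω, _, P, Z, -, hZ, hindep, _⟩ := exists_iid ℕ (γ.prod δ)
  have hident (i : ℕ) : IdentDistrib (Z i) (Z 0) P P := (hZ i).identDistrib (hZ 0)
  have hXlaw : HasLaw (fun ω ↦ (Z 0 ω).1) γ P := measurePreserving_fst.comp_hasLaw (hZ 0)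
  have hYlaw : HasLaw (fun ω ↦ (Z 0 ω).2) δ P := measurePreserving_snd.comp_hasLaw (hZ 0)
  have hX := (hXlaw.identDistrib .id).memLp_iff.2 hγ
  have hY := (hYlaw.identDistrib .id).memLp_iff.2 hδ
  have hXY := (indepFun_iff_hasLaw_prodMk_prod hXlaw hYlaw).2 (hZ 0)
  rw [← hXlaw.variance_eq] at hγ_var ⊢
  rw [← hYlaw.variance_eq] at hδ_var ⊢
  constructor
  · exact tendstoInDistribution_prod_of_map_centered_eq hZ hindep hμ hν (fun n ↦ by fun_prop)
      (fun n x y ↦ by simp only [sampleCov_centered])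
      (tendstoInDistribution_sqrt_mul_sampleCov_of_indepFun hX hY hXY hindep hident .id)
  · exact tendstoInDistribution_prod_of_map_centered_eq hZ hindep hμ hν (fun n ↦ by fun_prop)
      (fun n x y ↦ by simp only [sampleCorr_centered])
      (tendstoInDistribution_sqrt_mul_sampleCorr_of_indepFun hX hY hγ_var hδ_var hXY hindep hident
        .id)

/-- **Corollary 2 (equicorrelation).** Let `0 < ρ < 1` and let `X, Y ~ N(0, (1-ρ)I + ρ11ᵀ)`
be independent. Then `√n Tₙ →d N(0, (1-ρ)²)` and `√n ρₙ →d N(0,1)`. -/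
theorem equicorrelation_gaussian (ρ : ℝ) (hρ₀ : 0 < ρ) (hρ₁ : ρ < 1)
    (μ ν : (n : ℕ) → Measure (Fin n → ℝ))
    (hμ : ∀ n, IsCenteredGaussian (μ n) (equicorr n ρ))
    (hν : ∀ n, IsCenteredGaussian (ν n) (equicorr n ρ)) :
    TendstoInDistribution
      (fun n => Measure.map
        (fun p : (Fin n → ℝ) × (Fin n → ℝ) => Real.sqrt n * sampleCov p.1 p.2)
        ((μ n).prod (ν n)))
      (gaussianReal 0 (Real.toNNReal ((1 - ρ) ^ 2))) ∧
    TendstoInDistribution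
      (fun n => Measure.map
        (fun p : (Fin n → ℝ) × (Fin n → ℝ) => Real.sqrt n * sampleCorr p.1 p.2)
        ((μ n).prod (ν n)))
      (gaussianReal 0 1) := by
  have hσ : Var[id; gaussianReal 0 (1 - ρ).toNNReal] = 1 - ρ := by
    rw [variance_id_gaussianReal, Real.coe_toNNReal _ (sub_nonneg.2 hρ₁.le)]
  have hσ_ne : Var[id; gaussianReal 0 (1 - ρ).toNNReal] ≠ 0 := hσ.symm ▸ (sub_pos.2 hρ₁).ne'
  have hL2 := memLp_id_gaussianReal (μ := 0) (v := (1 - ρ).toNNReal) 2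
  simpa only [hσ, ← pow_two] using equicorrelation_gaussian_general _ _ hL2 hL2 hσ_ne hσ_ne μ ν
    (fun n ↦ (hμ n).map_centered_equicorr hρ₁.le) fun n ↦ (hν n).map_centered_equicorr hρ₁.le

end
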